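/- Let λ, β, σ² > 0 and B > 1. Let f: ℝ^d → ℝ satisfy |f(θ)| ≤ σ² log(B)/4 for all θ, let F(θ) = f(θ) + (λ/2)‖θ‖² be differentiable with (λ+β)-Lipschitz gradient, let θ* be a global minimizer of F, and let π be the Gibbs probability measure with density proportional to e^{−F/σ²}. Then ∫ F dπ − F(θ*) ≤ (dσ²/2) · ( log((β+λ)/λ) + √B ). -/

import Mathlib

open MeasureTheory

/-- The Gibbs probability measure on `ℝ^d` with potential `F` and noise parameter `σ²`:
density `e^{−F(θ)/σ²} / ∫ e^{−F/σ²} dθ` with respect to Lebesgue measure. -/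
noncomputable def gibbs {d : ℕ} (σ2 : ℝ) (F : EuclideanSpace ℝ (Fin d) → ℝ) :
    Measure (EuclideanSpace ℝ (Fin d)) :=
  (ENNReal.ofReal (∫ θ, Real.exp (-(F θ) / σ2)))⁻¹ •
    volume.withDensity (fun θ => ENNReal.ofReal (Real.exp (-(F θ) / σ2)))


namespace GibbsAux

lemma descent {d : ℕ} {L : ℝ} (F : EuclideanSpace ℝ (Fin d) → ℝ)
    (hFdiff : Differentiable ℝ F)
    (hFlip : ∀ x y, ‖gradient F x - gradient F y‖ ≤ L * ‖x - y‖)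
    (a : EuclideanSpace ℝ (Fin d)) (hmin : ∀ θ, F a ≤ F θ) (x : EuclideanSpace ℝ (Fin d)) :
    F x ≤ F a + L / 2 * ‖x - a‖ ^ 2 := by
  have hg0 : gradient F a = 0 := by
    have h : IsLocalMin F a := Filter.Eventually.of_forall hmin
    have h2 := h.fderiv_eq_zero
    simp [gradient, h2]
  have hd : ∀ t : ℝ, HasDerivAt (fun t : ℝ => F (a + t • (x - a)) - L / 2 * ‖x - a‖ ^ 2 * t ^ 2)
      (inner ℝ (gradient F (a + t • (x - a))) (x - a) - L / 2 * ‖x - a‖ ^ 2 * (2 * t)) t := by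
    intro t
    have h1 : HasDerivAt (fun t : ℝ => a + t • (x - a)) (x - a) t := by
      simpa using ((hasDerivAt_id t).smul_const (x - a)).const_add a
    have h2 := (hFdiff (a + t • (x - a))).hasGradientAt.hasFDerivAt
    have h3 := h2.comp_hasDerivAt t h1
    have h4 : HasDerivAt (fun t : ℝ => L / 2 * ‖x - a‖ ^ 2 * t ^ 2)
        (L / 2 * ‖x - a‖ ^ 2 * (2 * t)) t := by
      simpa using (hasDerivAt_pow 2 t).const_mul (L / 2 * ‖x - a‖ ^ 2)
    exact h3.sub h4
  have hanti : AntitoneOn (fun t : ℝ => F (a + t • (x - a)) - L / 2 * ‖x - a‖ ^ 2 * t ^ 2)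
      (Set.Icc 0 1) := by
    apply antitoneOn_of_deriv_nonpos (convex_Icc 0 1)
    · exact fun t _ => (hd t).continuousAt.continuousWithinAt
    · exact fun t _ => (hd t).differentiableAt.differentiableWithinAt
    · intro t ht
      rw [interior_Icc] at ht
      rw [(hd t).deriv]
      have h1 := real_inner_le_norm (gradient F (a + t • (x - a))) (x - a)
      have h2 := hFlip (a + t • (x - a)) a
      rw [hg0, sub_zero, add_sub_cancel_left, norm_smul, Real.norm_of_nonneg ht.1.le] at h2
      have h3 := mul_le_mul_of_nonneg_right h2 (norm_nonneg (x - a))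
      nlinarith
  have := hanti (Set.left_mem_Icc.2 zero_le_one) (Set.right_mem_Icc.2 zero_le_one) zero_le_one
  simp at this
  linarith

lemma gauss_int {d : ℕ} {b : ℝ} (hb : 0 < b) :
    ∫ v : EuclideanSpace ℝ (Fin d), Real.exp (-b * ‖v‖ ^ 2) = (Real.pi / b) ^ ((d : ℝ) / 2) := by
  have := GaussianFourier.integral_rexp_neg_mul_sq_norm (V := EuclideanSpace ℝ (Fin d)) hb
  simpa using this

lemma gauss_integrable {d : ℕ} {b : ℝ} (hb : 0 < b) :
    Integrable (fun v : EuclideanSpace ℝ (Fin d) => Real.exp (-b * ‖v‖ ^ 2)) := by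
  by_contra h
  have h1 := gauss_int (d := d) hb
  rw [integral_undef h] at h1
  have : 0 < (Real.pi / b) ^ ((d : ℝ) / 2) := by positivity
  linarith

lemma ptwise (b h t : ℝ) (hh : 0 < h) :
    t * Real.exp (-b * t) ≤ (Real.exp (-(b - h) * t) - Real.exp (-b * t)) / h := by
  rw [le_div_iff₀ hh]
  have h1 : Real.exp (-(b - h) * t) = Real.exp (-b * t) * Real.exp (h * t) := by
    rw [← Real.exp_add]; ring_nf
  rw [h1]
  have h2 := Real.add_one_le_exp (h * t)
  nlinarith [Real.exp_pos (-b * t)]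

lemma sq_integrable {d : ℕ} {b : ℝ} (hb : 0 < b) :
    Integrable (fun v : EuclideanSpace ℝ (Fin d) => ‖v‖ ^ 2 * Real.exp (-b * ‖v‖ ^ 2)) := by
  have hi := ((gauss_integrable (d := d) (b := b - b / 2) (by linarith)).sub
    (gauss_integrable (d := d) hb)).div_const (b / 2)
  refine hi.mono' (by fun_prop) (Filter.Eventually.of_forall fun v => ?_)
  rw [Real.norm_of_nonneg (by positivity)]
  exact ptwise b (b / 2) (‖v‖ ^ 2) (by linarith)

lemma sq_int_le {d : ℕ} {b : ℝ} (hb : 0 < b) :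
    ∫ v : EuclideanSpace ℝ (Fin d), ‖v‖ ^ 2 * Real.exp (-b * ‖v‖ ^ 2)
      ≤ d / (2 * b) * (Real.pi / b) ^ ((d : ℝ) / 2) := by
  have hder : HasDerivAt (fun h : ℝ => (Real.pi / (b - h)) ^ ((d : ℝ) / 2))
      (d / (2 * b) * (Real.pi / b) ^ ((d : ℝ) / 2)) 0 := by
    have h1 : HasDerivAt (fun h : ℝ => Real.pi / (b - h)) (Real.pi / b ^ 2) 0 := by
      have := (hasDerivAt_const (0 : ℝ) Real.pi).div ((hasDerivAt_id (0 : ℝ)).const_sub b)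
        (by simpa using hb.ne')
      refine this.congr_deriv ?_
      simp
    have h2 := h1.rpow_const (p := (d : ℝ) / 2) (Or.inl (by simp [hb.ne']))
    convert h2 using 1
    have hp : 0 < Real.pi / b := by positivity
    rw [sub_zero, Real.rpow_sub_one hp.ne']
    field_simp
  have ht := hder.tendsto_slope_zero_right
  refine ge_of_tendsto ht ?_
  have hev : Set.Ioo (0 : ℝ) b ∈ nhdsWithin (0 : ℝ) (Set.Ioi 0) := Ioo_mem_nhdsGT hb
  filter_upwards [hev] with h hh
  have hbh : 0 < b - h := by linarith [hh.2]
  simp only [zero_add, sub_zero, smul_eq_mul]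
  rw [← gauss_int hb, ← gauss_int hbh, ← integral_sub (gauss_integrable hbh) (gauss_integrable hb),
    inv_mul_eq_div, ← integral_div]
  exact integral_mono (sq_integrable hb)
    (((gauss_integrable hbh).sub (gauss_integrable hb)).div_const h)
    (fun v => ptwise b h (‖v‖ ^ 2) hh.1)

end GibbsAux

/-- **Near-optimality of Gibbs sampling.** Let `F(θ) = f(θ) + (λ/2)‖θ‖²` with
`|f| ≤ σ² log(B)/4`, `F` differentiable with `(λ+β)`-Lipschitz gradient and global
minimizer `θ*`, and let `π ∝ e^{−F/σ²}` be the Gibbs measure. Then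
`∫ F dπ − F(θ*) ≤ (dσ²/2)(log((β+λ)/λ) + √B)`. -/
theorem gibbs_near_optimal {d : ℕ} {lam β σ2 B : ℝ}
    (hlam : 0 < lam) (hβ : 0 < β) (hσ2 : 0 < σ2) (hB : 1 < B)
    (f : EuclideanSpace ℝ (Fin d) → ℝ)
    (hfbdd : ∀ θ, |f θ| ≤ σ2 * Real.log B / 4)
    (F : EuclideanSpace ℝ (Fin d) → ℝ)
    (hFdef : ∀ θ, F θ = f θ + lam / 2 * ‖θ‖ ^ 2)
    (hFdiff : Differentiable ℝ F)
    (hFlip : ∀ x y, ‖gradient F x - gradient F y‖ ≤ (lam + β) * ‖x - y‖)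
    (θstar : EuclideanSpace ℝ (Fin d)) (hmin : ∀ θ, F θstar ≤ F θ) :
    (∫ θ, F θ ∂(gibbs σ2 F)) - F θstar
      ≤ (d * σ2 / 2) * (Real.log ((β + lam) / lam) + Real.sqrt B) := by
  have hFc : Continuous F := hFdiff.continuous
  have hfc : Continuous f := by
    have : f = fun θ => F θ - lam / 2 * ‖θ‖ ^ 2 := by
      ext θ; rw [hFdef]; ring
    rw [this]; fun_prop
  set b : ℝ := lam / (2 * σ2) with hbdef
  have hb : 0 < b := by positivity
  set M : ℝ := Real.log B / 4 with hM
  have hfs : ∀ θ, |f θ / σ2| ≤ M := by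
    intro θ
    rw [abs_div, abs_of_pos hσ2, div_le_iff₀ hσ2]
    have := hfbdd θ
    rw [hM]; linarith
  set g : EuclideanSpace ℝ (Fin d) → ℝ := fun θ => Real.exp (-(F θ) / σ2) with hg
  have hgc : Continuous g := by rw [hg]; fun_prop
  have hgpos : ∀ θ, 0 < g θ := fun θ => Real.exp_pos _
  have hgeq : ∀ θ, g θ = Real.exp (-(f θ / σ2)) * Real.exp (-b * ‖θ‖ ^ 2) := by
    intro θ
    rw [← Real.exp_add, hg]
    simp only
    rw [hFdef, hbdef]
    congr 1
    field_simp
    ring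
  have hgle : ∀ θ, g θ ≤ Real.exp M * Real.exp (-b * ‖θ‖ ^ 2) := by
    intro θ
    rw [hgeq]
    have := (abs_le.1 (hfs θ)).1
    gcongr
    linarith
  have hgge : ∀ θ, Real.exp (-M) * Real.exp (-b * ‖θ‖ ^ 2) ≤ g θ := by
    intro θ
    rw [hgeq]
    have := (abs_le.1 (hfs θ)).2
    gcongr
  have hgi : Integrable g := by
    refine ((GibbsAux.gauss_integrable (d := d) hb).const_mul (Real.exp M)).mono'
      hgc.aestronglyMeasurable (Filter.Eventually.of_forall fun θ => ?_)
    rw [Real.norm_of_nonneg (hgpos θ).le]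
    exact hgle θ
  have hsqi : Integrable (fun θ => ‖θ‖ ^ 2 * g θ) := by
    refine ((GibbsAux.sq_integrable (d := d) hb).const_mul (Real.exp M)).mono'
      (by fun_prop) (Filter.Eventually.of_forall fun θ => ?_)
    rw [Real.norm_of_nonneg (mul_nonneg (by positivity) (hgpos θ).le)]
    nlinarith [mul_le_mul_of_nonneg_left (hgle θ) (sq_nonneg ‖θ‖)]
  have hfgi : Integrable (fun θ => f θ * g θ) := by
    refine (hgi.const_mul (σ2 * Real.log B / 4)).mono'
      (by fun_prop) (Filter.Eventually.of_forall fun θ => ?_)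
    rw [norm_mul, Real.norm_of_nonneg (hgpos θ).le]
    exact mul_le_mul_of_nonneg_right (hfbdd θ) (hgpos θ).le
  set Zg : ℝ := (Real.pi / b) ^ ((d : ℝ) / 2) with hZg
  have hZgpos : 0 < Zg := by positivity
  set Z : ℝ := ∫ θ, g θ with hZ
  have hZlow : Real.exp (-M) * Zg ≤ Z := by
    rw [hZg, ← GibbsAux.gauss_int hb, ← integral_const_mul]
    exact integral_mono ((GibbsAux.gauss_integrable hb).const_mul _) hgi hgge
  have hZpos : 0 < Z := lt_of_lt_of_le (by positivity) hZlow
  -- lower bound through smoothness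
  have hc : 0 < (lam + β) / (2 * σ2) := by positivity
  set Zs : ℝ := (Real.pi / ((lam + β) / (2 * σ2))) ^ ((d : ℝ) / 2) with hZs
  have hZspos : 0 < Zs := by positivity
  have hZlow2 : Real.exp (-(F θstar) / σ2) * Zs ≤ Z := by
    rw [hZs, ← GibbsAux.gauss_int hc,
      ← integral_sub_right_eq_self (fun v => Real.exp (-((lam + β) / (2 * σ2)) * ‖v‖ ^ 2)) θstar,
      ← integral_const_mul]
    refine integral_mono (((GibbsAux.gauss_integrable hc).comp_sub_right θstar).const_mul _) hgi ?_
    intro θ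
    have h := GibbsAux.descent F hFdiff hFlip θstar hmin θ
    simp only [hg]
    rw [← Real.exp_add]
    apply Real.exp_le_exp.2
    have h2 : -(F θstar) / σ2 + -((lam + β) / (2 * σ2)) * ‖θ - θstar‖ ^ 2
        = -(F θstar + (lam + β) / 2 * ‖θ - θstar‖ ^ 2) / σ2 := by
      field_simp
      ring
    rw [h2]
    exact div_le_div_of_nonneg_right (by linarith) hσ2.le
  -- integral against the Gibbs measure
  have hint : ∫ θ, F θ ∂(gibbs σ2 F) = Z⁻¹ * ∫ θ, F θ * g θ := by
    unfold gibbs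
    rw [integral_smul_measure, integral_withDensity_eq_integral_toReal_smul
      (by fun_prop) (Filter.Eventually.of_forall fun _ => ENNReal.ofReal_lt_top)]
    rw [ENNReal.toReal_inv, ENNReal.toReal_ofReal hZpos.le, smul_eq_mul]
    congr 1
    refine integral_congr_ae (Filter.Eventually.of_forall fun θ => ?_)
    simp only [smul_eq_mul]
    rw [ENNReal.toReal_ofReal (Real.exp_pos _).le, mul_comm]
  have hsplit : ∫ θ, F θ * g θ = (∫ θ, f θ * g θ) + lam / 2 * ∫ θ, ‖θ‖ ^ 2 * g θ := by
    rw [← integral_const_mul, ← integral_add hfgi (hsqi.const_mul _)]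
    congr 1
    ext θ
    rw [hFdef]; ring
  -- second moment
  have hexp2 : Real.exp M = Real.sqrt B * Real.exp (-M) := by
    have : Real.sqrt B = Real.exp (2 * M) := by
      rw [hM, Real.sqrt_eq_rpow, Real.rpow_def_of_pos (by linarith)]
      ring_nf
    rw [this, ← Real.exp_add]
    ring_nf
  have hsq : ∫ θ, ‖θ‖ ^ 2 * g θ ≤ d / (2 * b) * Real.sqrt B * Z := by
    calc ∫ θ, ‖θ‖ ^ 2 * g θ
        ≤ ∫ θ : EuclideanSpace ℝ (Fin d),
            Real.exp M * (‖θ‖ ^ 2 * Real.exp (-b * ‖θ‖ ^ 2)) := by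
          refine integral_mono hsqi ((GibbsAux.sq_integrable hb).const_mul _) fun θ => ?_
          have := mul_le_mul_of_nonneg_left (hgle θ) (sq_nonneg ‖θ‖)
          simp only
          linarith
      _ ≤ Real.exp M * (d / (2 * b) * Zg) := by
          rw [integral_const_mul]
          exact mul_le_mul_of_nonneg_left (GibbsAux.sq_int_le hb) (Real.exp_pos _).le
      _ = d / (2 * b) * Real.sqrt B * (Real.exp (-M) * Zg) := by rw [hexp2]; ring
      _ ≤ _ := by gcongr
  -- Jensen
  set c : ℝ := Zg / Z with hcdef
  have hcpos : 0 < c := by positivity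
  have hJ : ∫ θ, f θ * g θ ≤ σ2 * Real.log c * Z := by
    have hpt : ∀ θ, f θ * g θ ≤
        (σ2 / c) * Real.exp (-b * ‖θ‖ ^ 2) + (σ2 * Real.log c - σ2) * g θ := by
      intro θ
      have h1 := Real.add_one_le_exp (f θ / σ2 - Real.log c)
      rw [Real.exp_sub, Real.exp_log hcpos] at h1
      have h2 : Real.exp (-b * ‖θ‖ ^ 2) = Real.exp (f θ / σ2) * g θ := by
        rw [hgeq, ← mul_assoc, ← Real.exp_add]; simp
      rw [h2]
      have h3 := mul_le_mul_of_nonneg_left h1 (mul_pos hσ2 (hgpos θ)).le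
      have h4 : σ2 * g θ * (f θ / σ2 - Real.log c + 1)
          = f θ * g θ - (σ2 * Real.log c - σ2) * g θ := by
        field_simp
        ring
      have h5 : σ2 * g θ * (Real.exp (f θ / σ2) / c) = σ2 / c * (Real.exp (f θ / σ2) * g θ) := by
        ring
      linarith
    have hle := integral_mono hfgi (((GibbsAux.gauss_integrable hb).const_mul (σ2 / c)).add
      (hgi.const_mul (σ2 * Real.log c - σ2))) hpt
    have heq : ∫ θ, ((fun θ : EuclideanSpace ℝ (Fin d) => (σ2 / c) * Real.exp (-b * ‖θ‖ ^ 2))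
        + fun θ => (σ2 * Real.log c - σ2) * g θ) θ
        = σ2 / c * Zg + (σ2 * Real.log c - σ2) * Z := by
      rw [integral_add' ((GibbsAux.gauss_integrable hb).const_mul (σ2 / c))
        (hgi.const_mul (σ2 * Real.log c - σ2)), integral_const_mul, integral_const_mul,
        GibbsAux.gauss_int hb]
    have hcz : σ2 / c * Zg = σ2 * Z := by
      rw [hcdef]; field_simp
    have hle2 := hle.trans_eq heq
    rw [hcz] at hle2
    linarith
  have hlogc : Real.log c ≤ F θstar / σ2 + d / 2 * Real.log ((β + lam) / lam) := by
    have h1 : Real.log (Real.exp (-(F θstar) / σ2) * Zs) ≤ Real.log Z :=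
      Real.log_le_log (by positivity) hZlow2
    rw [Real.log_mul (Real.exp_pos _).ne' hZspos.ne', Real.log_exp] at h1
    rw [hcdef, Real.log_div hZgpos.ne' hZpos.ne']
    have h2 : Real.log Zg - Real.log Zs = d / 2 * Real.log ((β + lam) / lam) := by
      rw [hZg, hZs, Real.log_rpow (by positivity), Real.log_rpow (by positivity), ← mul_sub,
        ← Real.log_div (by positivity) (by positivity)]
      congr 2
      rw [hbdef]
      field_simp
      ring
    have h3 : -(F θstar) / σ2 = -(F θstar / σ2) := by ring
    linarith
  have hfin : Z⁻¹ * ∫ θ, F θ * g θ ≤ σ2 * Real.log c + lam / 2 * (d / (2 * b) * Real.sqrt B) := by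
    rw [inv_mul_le_iff₀ hZpos, hsplit]
    have := mul_le_mul_of_nonneg_left hsq (half_pos hlam).le
    linarith
  have hmul := mul_le_mul_of_nonneg_left hlogc hσ2.le
  have e1 : σ2 * (F θstar / σ2 + d / 2 * Real.log ((β + lam) / lam))
      = F θstar + d * σ2 / 2 * Real.log ((β + lam) / lam) := by
    field_simp
  have e2 : lam / 2 * (d / (2 * b) * Real.sqrt B) = d * σ2 / 2 * Real.sqrt B := by
    rw [hbdef]; field_simp
  rw [hint, mul_add]
  linarith
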